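/- Let R be a finite principal ideal ring with maximal ideals m_1, …, m_s. Then an MDS code of length n and rank k over R exists if and only if there exists an MDS code of length n and dimension k over every residue field R/m_i. -/

import Mathlib

/-- The Hamming weight of a vector: the number of nonzero coordinates. -/
noncomputable def hammingWeight {R : Type*} [Zero R] {n : ℕ} (v : Fin n → R) : ℕ :=
  Nat.card {i : Fin n // v i ≠ 0}

/-- The minimum Hamming distance of a code. -/
noncomputable def minHammingDist {R : Type*} [CommRing R] {n : ℕ}
    (C : Submodule R (Fin n → R)) : ℕ :=
  sInf {d | ∃ v ∈ C, v ≠ 0 ∧ hammingWeight v = d}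

/-- A (nonzero) code `C` of length `n` over the alphabet `R` is MDS if it meets the
Singleton bound `d_H(C) = n − log_{|R|}|C| + 1`, i.e. `|C| = |R|^(n + 1 − d_H(C))`. -/
noncomputable def IsMDSCode {R : Type*} [CommRing R] {n : ℕ}
    (C : Submodule R (Fin n → R)) : Prop :=
  C ≠ ⊥ ∧ minHammingDist C ≤ n ∧ Nat.card C = Nat.card R ^ (n + 1 - minHammingDist C)

/-- The rank of a code: the minimal number of generators of `C` as a module. -/
noncomputable def codeRank {R M : Type*} [CommRing R] [AddCommGroup M] [Module R M]
    (C : Submodule R M) : ℕ :=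
  sInf {k | ∃ v : Fin k → M, Submodule.span R (Set.range v) = C}

theorem weight_add_le_iff {R : Type*} [Zero R] {n k : ℕ} (v : Fin n → R) :
    hammingWeight v + k ≤ n ↔
      ∃ f : Fin k → Fin n, Function.Injective f ∧ ∀ i, v (f i) = 0 := by
  classical
  have h1 : hammingWeight v + Fintype.card {i : Fin n // v i = 0} = n := by
    unfold hammingWeight
    rw [Nat.card_eq_fintype_card, Fintype.card_subtype_compl]
    have := Fintype.card_subtype_le (fun i : Fin n => v i = 0)
    simp only [Fintype.card_fin] at *
    omega
  have h2 : hammingWeight v + k ≤ n ↔ Fintype.card (Fin k) ≤ Fintype.card {i : Fin n // v i = 0} := by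
    rw [Fintype.card_fin]; omega
  rw [h2]
  constructor
  · intro h
    obtain ⟨e⟩ := Function.Embedding.nonempty_of_card_le h
    exact ⟨fun i => (e i).1, fun a b hab => e.injective (Subtype.ext hab), fun i => (e i).2⟩
  · rintro ⟨f, hf, h0⟩
    exact Fintype.card_le_of_injective (fun i => (⟨f i, h0 i⟩ : {i : Fin n // v i = 0}))
      (fun a b hab => hf (congrArg Subtype.val hab))

theorem codeRank_of_equiv {R : Type*} [CommRing R] [Nontrivial R] {n k : ℕ}
    (C : Submodule R (Fin n → R)) (e : C ≃ₗ[R] (Fin k → R)) : codeRank C = k := by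
  classical
  unfold codeRank
  have hmem : k ∈ {k | ∃ v : Fin k → (Fin n → R), Submodule.span R (Set.range v) = C} := by
    refine ⟨fun i => (e.symm (Pi.single i 1) : Fin n → R), ?_⟩
    have h := ((Pi.basisFun R (Fin k)).map e.symm).span_eq
    have h2 := congrArg (Submodule.map C.subtype) h
    rw [Submodule.map_span, Submodule.map_top, Submodule.range_subtype, ← Set.range_comp] at h2
    convert h2 using 3
    ext i
    simp
  apply le_antisymm (Nat.sInf_le hmem)
  have hne := Nat.sInf_mem ⟨k, hmem⟩
  generalize sInf {k | ∃ v : Fin k → (Fin n → R), Submodule.span R (Set.range v) = C} = k' at *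
  obtain ⟨v, hv⟩ := hne
  have hr : LinearMap.range (Fintype.linearCombination R v) = C := by
    rw [Fintype.range_linearCombination, hv]
  let g : (Fin k' → R) →ₗ[R] C :=
    (Fintype.linearCombination R v).codRestrict C (fun x => hr ▸ LinearMap.mem_range_self _ x)
  apply le_of_fin_surjective R (e.toLinearMap ∘ₗ g)
  rw [LinearMap.coe_comp]
  refine e.surjective.comp ?_
  rintro ⟨c, hc⟩
  rw [← hr] at hc
  obtain ⟨x, rfl⟩ := hc
  exact ⟨x, rfl⟩

open Matrix in
theorem mds_iff_matrix (R : Type*) [CommRing R] [Finite R] [Nontrivial R] (n k : ℕ) :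
    (∃ C : Submodule R (Fin n → R), IsMDSCode C ∧ codeRank C = k) ↔
      1 ≤ k ∧ k ≤ n ∧ ∃ G : Matrix (Fin k) (Fin n) R, ∀ f : Fin k → Fin n,
        Function.Injective f → IsUnit (G.submatrix id f).det := by
  classical
  constructor
  · rintro ⟨C, ⟨hC, hd, hcard⟩, hk⟩
    obtain ⟨w, hw, hw0⟩ := (Submodule.ne_bot_iff C).1 hC
    have hmin : ∀ v ∈ C, v ≠ 0 → minHammingDist C ≤ hammingWeight v := fun v hv h0 =>
      Nat.sInf_le ⟨v, hv, h0, rfl⟩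
    obtain ⟨u, hu, hu0, hud⟩ : minHammingDist C ∈ {d | ∃ v ∈ C, v ≠ 0 ∧ hammingWeight v = d} :=
      Nat.sInf_mem ⟨_, w, hw, hw0, rfl⟩
    have hd1 : 1 ≤ minHammingDist C := by
      by_contra hlt
      have : hammingWeight u + n ≤ n := by omega
      obtain ⟨f, hf, h0⟩ := (weight_add_le_iff u).1 this
      apply hu0
      funext i
      obtain ⟨j, rfl⟩ := (Finite.injective_iff_surjective.1 hf) i
      exact h0 j
    obtain ⟨K, hK⟩ : ∃ K, K = n + 1 - minHammingDist C := ⟨_, rfl⟩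
    rw [← hK] at hcard
    have hbij : ∀ f : Fin K → Fin n, Function.Injective f →
        Function.Bijective ((LinearMap.funLeft R R f) ∘ₗ C.subtype) := by
      intro f hf
      rw [Nat.bijective_iff_injective_and_card]
      refine ⟨?_, by rw [hcard]; simp [Nat.card_fun]⟩
      rw [← LinearMap.ker_eq_bot, LinearMap.ker_eq_bot']
      rintro ⟨v, hv⟩ h0
      by_contra hne
      have hv0 : v ≠ 0 := fun h => hne (Subtype.ext h)
      have h1 := hmin v hv hv0
      have h2 := (weight_add_le_iff (k := K) v).2 ⟨f, hf, fun i => congrFun h0 i⟩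
      omega
    have hKn : K ≤ n := by omega
    let e := LinearEquiv.ofBijective _ (hbij (Fin.castLE hKn) (Fin.castLE_injective hKn))
    have := codeRank_of_equiv C e
    obtain rfl : K = k := this.symm.trans hk
    refine ⟨by omega, hKn, Matrix.of fun i => (e.symm (Pi.single i 1) : Fin n → R), ?_⟩
    intro f hf
    rw [← Matrix.isUnit_iff_isUnit_det, ← Matrix.vecMul_surjective_iff_isUnit]
    intro y
    obtain ⟨c, hc⟩ := (hbij f hf).2 y
    refine ⟨e c, ?_⟩
    rw [← hc]
    have hcc : c = ∑ i, e c i • e.symm (Pi.single i 1) := by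
      apply e.injective
      simp only [map_sum, map_smul, LinearEquiv.apply_symm_apply]
      ext j
      simp [Finset.sum_apply, Pi.single_apply]
    funext j
    conv_rhs => rw [hcc]
    simp [Matrix.vecMul, dotProduct, LinearMap.funLeft]
  · rintro ⟨hk1, hkn, G, hG⟩
    have hsub : ∀ (f : Fin k → Fin n) (x : Fin k → R) (i : Fin k),
        (x ᵥ* G.submatrix id f) i = (x ᵥ* G) (f i) := fun f x i => rfl

    have hinj : ∀ f : Fin k → Fin n, Function.Injective f → ∀ x : Fin k → R,
        (∀ i, (x ᵥ* G) (f i) = 0) → x = 0 := by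
      intro f hf x hx
      have := hG f hf
      rw [← Matrix.isUnit_iff_isUnit_det] at this
      apply Matrix.vecMul_injective_of_isUnit this
      funext i
      simp only [Matrix.zero_vecMul]
      exact hx i
    have hL : Function.Injective G.vecMulLinear := by
      rw [← LinearMap.ker_eq_bot, LinearMap.ker_eq_bot']
      intro x hx
      exact hinj _ (Fin.castLE_injective hkn) x (fun i => congrFun hx _)
    let e := LinearEquiv.ofInjective G.vecMulLinear hL
    have hcard : Nat.card (LinearMap.range G.vecMulLinear) = Nat.card R ^ k := by
      rw [← Nat.card_congr e.toEquiv]; simp [Nat.card_fun]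
    have hu := hG _ (Fin.castLE_injective hkn)
    rw [← Matrix.isUnit_iff_isUnit_det, ← Matrix.vecMul_surjective_iff_isUnit] at hu
    obtain ⟨x, hx⟩ := hu (Pi.single ⟨0, hk1⟩ 1)
    have hxi : ∀ i, G.vecMulLinear x (Fin.castLE hkn i) = (Pi.single ⟨0, hk1⟩ 1 : Fin k → R) i :=
      fun i => congrFun hx i
    have hx0 : G.vecMulLinear x ≠ 0 := by
      intro h
      have := hxi ⟨0, hk1⟩
      rw [h] at this
      simp at this
    have hxw : hammingWeight (G.vecMulLinear x) + (k - 1) ≤ n := by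
      refine (weight_add_le_iff _).2 ⟨fun i => Fin.castLE hkn ⟨i.1 + 1, by omega⟩, ?_, ?_⟩
      · intro a b hab
        simp [Fin.ext_iff] at hab
        exact Fin.ext hab
      · intro i
        rw [hxi, Pi.single_eq_of_ne]
        simp [Fin.ext_iff]
    have hmin : minHammingDist (LinearMap.range G.vecMulLinear) = n + 1 - k := by
      apply le_antisymm
      · have hle : minHammingDist (LinearMap.range G.vecMulLinear) ≤
            hammingWeight (G.vecMulLinear x) :=
          Nat.sInf_le ⟨_, LinearMap.mem_range_self _ x, hx0, rfl⟩
        omega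
      · refine le_csInf ⟨_, _, LinearMap.mem_range_self _ x, hx0, rfl⟩ ?_
        rintro d ⟨_, ⟨y, rfl⟩, hy0, rfl⟩
        by_contra hlt
        obtain ⟨f, hf, h0⟩ := (weight_add_le_iff (k := k) (G.vecMulLinear y)).1 (by omega)
        apply hy0
        rw [hinj f hf y h0, map_zero]
    refine ⟨LinearMap.range G.vecMulLinear, ⟨?_, ?_, ?_⟩, codeRank_of_equiv _ e.symm⟩
    · exact (Submodule.ne_bot_iff _).2 ⟨_, LinearMap.mem_range_self _ x, hx0⟩
    · omega
    · rw [hcard, hmin]; congr 1; omega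

/-- Let `R` be a finite principal ideal ring with maximal ideals `m_1, …, m_s`.  An MDS code
of length `n` and rank `k` over `R` exists if and only if an MDS code of length `n` and
dimension `k` exists over every residue field `R/m_i`. -/
theorem exists_mds_code_over_PIR_iff (R : Type*) [CommRing R] [Finite R] [Nontrivial R]
    [IsPrincipalIdealRing R] (n k : ℕ) :
    (∃ C : Submodule R (Fin n → R), IsMDSCode C ∧ codeRank C = k) ↔
      ∀ m : Ideal R, m.IsMaximal →
        ∃ D : Submodule (R ⧸ m) (Fin n → R ⧸ m), IsMDSCode D ∧ codeRank D = k := by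
  have key : ∀ m : Ideal R, m.IsMaximal → ∀ (G : Matrix (Fin k) (Fin n) R) (f : Fin k → Fin n),
      ((G.map (Ideal.Quotient.mk m)).submatrix id f).det =
        Ideal.Quotient.mk m (G.submatrix id f).det := by
    intro m hm G f
    rw [RingHom.map_det]
    rfl
  rw [mds_iff_matrix]
  constructor
  · rintro ⟨h1, h2, G, hG⟩ m hm
    have : Nontrivial (R ⧸ m) := Ideal.Quotient.nontrivial_iff.2 hm.ne_top
    have : Finite (R ⧸ m) := Finite.of_surjective _ Ideal.Quotient.mk_surjective
    rw [mds_iff_matrix]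
    refine ⟨h1, h2, G.map (Ideal.Quotient.mk m), fun f hf => ?_⟩
    have := (hG f hf).map (Ideal.Quotient.mk m)
    rw [RingHom.map_det] at this
    exact this
  · intro h
    have h' : ∀ m : MaximalSpectrum R, 1 ≤ k ∧ k ≤ n ∧ ∃ G : Matrix (Fin k) (Fin n) (R ⧸ m.asIdeal),
        ∀ f : Fin k → Fin n, Function.Injective f → IsUnit (G.submatrix id f).det := by
      intro m
      have : Nontrivial (R ⧸ m.asIdeal) := Ideal.Quotient.nontrivial_iff.2 m.isMaximal.ne_top
      have : Finite (R ⧸ m.asIdeal) := Finite.of_surjective _ Ideal.Quotient.mk_surjective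
      rw [← mds_iff_matrix]
      exact h m.asIdeal m.isMaximal
    choose h1 h2 G hG using h'
    obtain ⟨m0⟩ : Nonempty (MaximalSpectrum R) := inferInstance
    refine ⟨h1 m0, h2 m0, ?_⟩
    have : Finite (MaximalSpectrum R) := inferInstance
    have hcop : Pairwise (Function.onFun IsCoprime (fun m : MaximalSpectrum R => m.asIdeal)) := by
      intro a b hab
      have := a.isMaximal
      have := b.isMaximal
      exact Ideal.isCoprime_of_isMaximal (fun h => hab (MaximalSpectrum.ext h))
    have hl : ∀ i j, ∃ r : R, ∀ m : MaximalSpectrum R, Ideal.Quotient.mk m.asIdeal r = G m i j := by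
      intro i j
      obtain ⟨r, hr⟩ := Ideal.pi_mkQ_surjective hcop (fun m => G m i j)
      exact ⟨r, fun m => congrFun hr m⟩
    choose A hA using hl
    refine ⟨Matrix.of A, fun f hf => ?_⟩
    by_contra hnu
    obtain ⟨m, hm, hmem⟩ := exists_max_ideal_of_mem_nonunits hnu
    have h3 := hG ⟨m, hm⟩ f hf
    have h4 : G ⟨m, hm⟩ = (Matrix.of A).map (Ideal.Quotient.mk m) := by
      ext i j
      exact (hA i j ⟨m, hm⟩).symm
    rw [h4, key m hm, Ideal.Quotient.eq_zero_iff_mem.2 hmem] at h3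
    have : Nontrivial (R ⧸ m) := Ideal.Quotient.nontrivial_iff.2 hm.ne_top
    exact not_isUnit_zero h3
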